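/- In the critical-execution setting (a recoverable wait-free binary consensus algorithm for the n processes, a configuration C, an integer z ≥ 1, and α ∈ 𝓔*_z(C) critical with respect to 𝓔*_z(C)), let O be the object that every process is poised to access in Cα, and suppose there exist v ∈ {0,1}, a process p_i on team v in Cα, and R_i ∈ 𝒮(𝒫 − {p_i}) such that value(O, Cα p_iR_i) = value(O, Cα X), where either X = p_{n−1} and p_{n−1} is on team 1−v in Cα, or X = ⟨⟩. Let p_ℓ be the process with the smallest identifier among p_i and the processes taking steps in R_i. Then for every k ∈ {ℓ+1, …, n−1} and every execution α′ ∈ 𝓔*_z(CαXλ_k) that contains no events by p_0, …, p_{k−1} and is critical with respect to 𝓔*_z(CαXλ_k), the configuration CαXλ_kα′ is either n-recording or v-hiding, where these notions are taken with respect to the critical execution α′, the execution set 𝓔*_z(CαXλ_k), and the common object that all processes are poised to access in CαXλ_kα′. -/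

import Mathlib

/-!
Put `D = CαXλ_k`, `S = p_i R_i` and `q = p_{n-1}`.  After `α`, the schedules `S` and `X` access only
`O` and leave the same value in it, and `λ_k` resets `p_k, …, p_{n-1}`; so these processes cannot
distinguish `CαSλ_k`, in which the execution is `v`-univalent, from `D`, and what they do together
after `D` decides as it does after `CαSλ_k`.

The process `q` serves as the referee: if two executions reach the same object values and both leave
room for a crash of `q`, then `q`, crashed and run alone, decides the same value after both, so the
two executions cannot be univalent with different values.  Here the step of `p_ℓ` in `S` leaves room
for a crash of `q` besides the one in `λ_k`, since `z·n ≥ 2`, and so does every step after `α'` by a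
process other than `q`.  In `Dα'` the process `q` itself is on team `v`, as one sees by running it
alone after `CαSλ_kα'`, so every schedule starting with a process on team `1-v` leaves such room.

Hence a value `value(O', Dα's)` is not in `U_{1-v}` when `s` consists of steps by `p_k, …, p_{n-1}`
(compare with `CαSλ_kα's`), in particular when `s` is empty, nor when `s` starts with a process on
team `v` and some process other than `q` takes a step in it (compare with `Dα's` itself).  So `U_v`
and `U_{1-v}` are disjoint and `value(O', Dα')` is not in `U_{1-v}`: the configuration is `v`-hiding
if the value is in `U_v`, and vacuously `n`-recording if not.
-/

namespace RecoverableConsensus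

/-- A deterministic object type: a set of values, operations and responses together with a
transition function assigning to each (value, operation) pair a unique response and a unique
resulting value. -/
structure DetType : Type 1 where
  Value : Type
  Op : Type
  Resp : Type
  δ : Value → Op → Resp × Value

/-- A type is readable if it has a Read operation that returns (an injective encoding of)
the current value of the object without changing it. -/
def Readable (T : DetType) : Prop :=
  ∃ (read : T.Op) (ι : T.Value → T.Resp),
    Function.Injective ι ∧ ∀ v, T.δ v read = (ι v, v)

/-- The register type over the value set `V`: the operation `none` is Read (returning the
current value without changing it) and `some v` is Write(v) (changing the value to `v`). -/
def RegisterType (V : Type) : DetType where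
  Value := V
  Op := Option V
  Resp := V
  δ := fun u op =>
    match op with
    | none => (u, u)
    | some v => (v, v)

def IsRegister (T : DetType) : Prop := ∃ V : Type, T = RegisterType V

/-- An event is either a step by a process or a crash of a process. -/
inductive Event (n : ℕ) : Type where
  | step : Fin n → Event n
  | crash : Fin n → Event n
deriving DecidableEq

/-- An algorithm for `n` processes: a collection of shared objects, each with a deterministic
type and an initial value, and for each process a deterministic state machine with an initial
state depending on the process's binary input.  Each state determines the process's next step
(`pending`: an operation applied to a designated object, or `none` for a no-op); the state
reached after a step is determined by the current state and the response received (`next`).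
`output i s = some v` means that `s` is an output state of process `i` for the value `v`;
processes in output states take only no-op steps. -/
structure Algorithm (n : ℕ) : Type 1 where
  ObjIdx : Type
  objType : ObjIdx → DetType
  objInit : (o : ObjIdx) → (objType o).Value
  PState : Fin n → Type
  init : (i : Fin n) → Bool → PState i
  pending : (i : Fin n) → PState i → Option ((o : ObjIdx) × (objType o).Op)
  next : (i : Fin n) → PState i → (o : ObjIdx) → (objType o).Resp → PState i
  output : (i : Fin n) → PState i → Option Bool
  output_noop : ∀ i s, output i s ≠ none → pending i s = none

/-- A configuration assigns a state to each process and a value to each object. -/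
structure Config {n : ℕ} (A : Algorithm n) : Type where
  pstate : (i : Fin n) → A.PState i
  oval : (o : A.ObjIdx) → (A.objType o).Value

variable {n : ℕ}

/-- The effect of one event on a configuration.  A crash of `p_i` resets `p_i` to its initial
state (for its input) and leaves all object values unchanged; a step of `p_i` applies its
pending operation (if any) to the designated object, receiving the response determined by the
type's transition function. -/
noncomputable def applyEvent (A : Algorithm n) (input : Fin n → Bool) (C : Config A) :
    Event n → Config A
  | .crash i => { C with pstate := Function.update C.pstate i (A.init i (input i)) }
  | .step i =>
    letI : DecidableEq A.ObjIdx := Classical.decEq _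
    match A.pending i (C.pstate i) with
    | none => C
    | some ⟨o, op⟩ =>
      { pstate := Function.update C.pstate i
          (A.next i (C.pstate i) o ((A.objType o).δ (C.oval o) op).1),
        oval := Function.update C.oval o ((A.objType o).δ (C.oval o) op).2 }

/-- Since the algorithm is deterministic, a finite execution from `C` is determined by its
schedule, i.e. its list of events; `run A input C σ` is the configuration `Cσ` reached by
applying the events of `σ` in order from `C`. -/
noncomputable def run (A : Algorithm n) (input : Fin n → Bool) (C : Config A) :
    List (Event n) → Config A
  | [] => C
  | e :: σ => run A input (applyEvent A input C e) σ

/-- The initial configuration: every process in its initial state, every object at its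
initial value. -/
def initConfig (A : Algorithm n) (input : Fin n → Bool) : Config A :=
  ⟨fun i => A.init i (input i), A.objInit⟩

/-- Process `i` has decided `v` in `Cσ`: at some point along the execution `σ` from `C`,
process `i` was in an output state for `v`. -/
def HasDecided (A : Algorithm n) (input : Fin n → Bool) (C : Config A)
    (σ : List (Event n)) (i : Fin n) (v : Bool) : Prop :=
  ∃ τ, τ <+: σ ∧ A.output i ((run A input C τ).pstate i) = some v

def CrashFree (σ : List (Event n)) : Prop := ∀ i : Fin n, Event.crash i ∉ σ

/-- The first `k` events of an infinite execution. -/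
def initSeg (e : ℕ → Event n) (k : ℕ) : List (Event n) := (List.range k).map e

/-- Agreement: in every execution no two processes decide different values. -/
def Agreement (A : Algorithm n) : Prop :=
  ∀ (input : Fin n → Bool) (σ : List (Event n)) (i j : Fin n) (v w : Bool),
    HasDecided A input (initConfig A input) σ i v →
    HasDecided A input (initConfig A input) σ j w → v = w

/-- Validity: every decided value is the input of some process. -/
def Validity (A : Algorithm n) : Prop :=
  ∀ (input : Fin n → Bool) (σ : List (Event n)) (i : Fin n) (v : Bool),
    HasDecided A input (initConfig A input) σ i v → ∃ j, input j = v

/-- Recoverable wait-freedom: every process, starting from its initial state, either crashes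
or decides within a finite number of its own steps.  Equivalently: in every infinite execution
in which process `i` starts at (or is reset by a crash to) its initial state, takes infinitely
many steps and crashes only finitely often, it eventually reaches an output state. -/
def RecWaitFree (A : Algorithm n) : Prop :=
  ∀ (input : Fin n → Bool) (C : Config A) (e : ℕ → Event n) (i : Fin n),
    (C.pstate i = A.init i (input i) ∨ ∃ k, e k = Event.crash i) →
    (∀ m, ∃ k, m ≤ k ∧ e k = Event.step i) →
    (∃ m, ∀ k, m ≤ k → e k ≠ Event.crash i) →
    ∃ (k : ℕ) (v : Bool), A.output i ((run A input C (initSeg e k)).pstate i) = some v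

/-- A recoverable wait-free binary consensus algorithm. -/
def SolvesRecConsensus (A : Algorithm n) : Prop :=
  Agreement A ∧ Validity A ∧ RecWaitFree A

/-- Agreement restricted to crash-free executions. -/
def AgreementCF (A : Algorithm n) : Prop :=
  ∀ (input : Fin n → Bool) (σ : List (Event n)), CrashFree σ →
    ∀ (i j : Fin n) (v w : Bool),
      HasDecided A input (initConfig A input) σ i v →
      HasDecided A input (initConfig A input) σ j w → v = w

/-- Validity restricted to crash-free executions. -/
def ValidityCF (A : Algorithm n) : Prop :=
  ∀ (input : Fin n → Bool) (σ : List (Event n)), CrashFree σ →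
    ∀ (i : Fin n) (v : Bool),
      HasDecided A input (initConfig A input) σ i v → ∃ j, input j = v

/-- Wait-freedom: in crash-free executions, every process that takes infinitely many steps
decides. -/
def WaitFree (A : Algorithm n) : Prop :=
  ∀ (input : Fin n → Bool) (e : ℕ → Event n),
    (∀ (k : ℕ) (i : Fin n), e k ≠ Event.crash i) →
    ∀ i : Fin n, (∀ m, ∃ k, m ≤ k ∧ e k = Event.step i) →
    ∃ (k : ℕ) (v : Bool),
      A.output i ((run A input (initConfig A input) (initSeg e k)).pstate i) = some v

/-- A wait-free binary consensus algorithm (for the model in which crashes are permanent,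
i.e. only crash-free executions are relevant). -/
def SolvesWFConsensus (A : Algorithm n) : Prop :=
  AgreementCF A ∧ ValidityCF A ∧ WaitFree A

/-- The number of crashes of process `i` in `σ`. -/
def crashCount (i : Fin n) (σ : List (Event n)) : ℕ :=
  (σ.filter fun e => decide (e = Event.crash i)).length

def isStepBelow (i : Fin n) : Event n → Bool
  | .step j => decide (j < i)
  | .crash _ => false

/-- The total number of steps taken by processes `p_0, …, p_{i-1}` in `σ`. -/
def stepsBelow (i : Fin n) (σ : List (Event n)) : ℕ := (σ.filter (isStepBelow i)).length

/-- The crash bound: for every process `p_i`, the number of crashes of `p_i` is at most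
`z·n` times the total number of steps of `p_0, …, p_{i-1}` (for `i = 0` this says that `p_0`
never crashes). -/
def EMem (z : ℕ) (σ : List (Event n)) : Prop :=
  ∀ i : Fin n, crashCount i σ ≤ z * n * stepsBelow i σ

/-- `𝓔_z`: executions satisfying the crash bound. -/
def ESet (n z : ℕ) : Set (List (Event n)) := { σ | EMem z σ }

/-- `𝓔*_z`: executions satisfying the crash bound in every prefix. -/
def EStarSet (n z : ℕ) : Set (List (Event n)) := { σ | ∀ τ, τ <+: σ → EMem z τ }

/-- `e` is an event by a process in `P`. -/
def eventBy (P : Set (Fin n)) : Event n → Prop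
  | .step i => i ∈ P
  | .crash i => i ∈ P

/-- The set of processes `P` is `v`-univalent in the execution `α` from `C` with respect to
the set of executions `𝒜`. -/
def VUnivalentIn (A : Algorithm n) (input : Fin n → Bool) (C : Config A)
    (𝒜 : Set (List (Event n))) (P : Set (Fin n)) (α : List (Event n)) (v : Bool) : Prop :=
  α ∈ 𝒜 ∧ ∀ β : List (Event n), (∀ e ∈ β, eventBy P e) → (α ++ β) ∈ 𝒜 →
    ∀ (i : Fin n) (w : Bool), HasDecided A input C (α ++ β) i w → w = v

/-- The set of processes `P` is bivalent in the execution `α` from `C` with respect to `𝒜`. -/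
def BivalentIn (A : Algorithm n) (input : Fin n → Bool) (C : Config A)
    (𝒜 : Set (List (Event n))) (P : Set (Fin n)) (α : List (Event n)) : Prop :=
  ∀ v : Bool, ∃ β : List (Event n), (∀ e ∈ β, eventBy P e) ∧ (α ++ β) ∈ 𝒜 ∧
    ∃ i : Fin n, HasDecided A input C (α ++ β) i v

/-- `P` is univalent in `α` with respect to `𝒜`: `v`-univalent for some `v`. -/
def UnivalentIn (A : Algorithm n) (input : Fin n → Bool) (C : Config A)
    (𝒜 : Set (List (Event n))) (P : Set (Fin n)) (α : List (Event n)) : Prop :=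
  ∃ v : Bool, VUnivalentIn A input C 𝒜 P α v

/-- `α ∈ 𝒜` is critical with respect to `𝒜`: `α` is bivalent with respect to `𝒜` and every
nonempty extension of `α` inside `𝒜` is univalent with respect to `𝒜`. -/
def Critical (A : Algorithm n) (input : Fin n → Bool) (C : Config A)
    (𝒜 : Set (List (Event n))) (α : List (Event n)) : Prop :=
  α ∈ 𝒜 ∧ BivalentIn A input C 𝒜 Set.univ α ∧
  ∀ β : List (Event n), β ≠ [] → (α ++ β) ∈ 𝒜 → UnivalentIn A input C 𝒜 Set.univ (α ++ β)

/-- Process `i` is on team `v` in `Cα` (with respect to `𝒜`): `α p_i` is `v`-univalent. -/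
def OnTeam (A : Algorithm n) (input : Fin n → Bool) (C : Config A)
    (𝒜 : Set (List (Event n))) (α : List (Event n)) (i : Fin n) (v : Bool) : Prop :=
  VUnivalentIn A input C 𝒜 Set.univ (α ++ [Event.step i]) v

/-- Process `i` is poised to apply an operation to object `O` in configuration `C`. -/
def PoisedAt (A : Algorithm n) (C : Config A) (i : Fin n) (O : A.ObjIdx) : Prop :=
  ∃ op, A.pending i (C.pstate i) = some ⟨O, op⟩

/-- `σ ∈ 𝒮(P)`: a crash-free schedule in which each process of `P` takes at most one step
and no other process takes a step. -/
def IsSched (P : Set (Fin n)) (σ : List (Event n)) : Prop :=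
  ∃ l : List (Fin n), l.Nodup ∧ (∀ j ∈ l, j ∈ P) ∧ σ = l.map Event.step

/-- The schedule `λ_k = c_k c_{k+1} ⋯ c_{n-1}`. -/
def lambdaSched (n k : ℕ) : List (Event n) :=
  ((List.finRange n).filter fun j => decide (k ≤ j.val)).map Event.crash

/-- `U_v`: the set of values of object `O` reachable from `Dα` by a schedule in `𝒮(𝒫)`
whose first process is on team `v`. -/
def USetCfg (A : Algorithm n) (input : Fin n → Bool) (D : Config A)
    (𝒜 : Set (List (Event n))) (α : List (Event n)) (O : A.ObjIdx) (v : Bool) :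
    Set (A.objType O).Value :=
  { w | ∃ (j : Fin n) (σ : List (Event n)), OnTeam A input D 𝒜 α j v ∧
        IsSched {k : Fin n | k ≠ j} σ ∧
        w = (run A input D (α ++ Event.step j :: σ)).oval O }

/-- The configuration `Dα` is `v`-hiding. -/
def VHiding (A : Algorithm n) (input : Fin n → Bool) (D : Config A)
    (𝒜 : Set (List (Event n))) (α : List (Event n)) (O : A.ObjIdx) (v : Bool) : Prop :=
  USetCfg A input D 𝒜 α O false ∩ USetCfg A input D 𝒜 α O true = ∅ ∧
  (run A input D α).oval O ∈ USetCfg A input D 𝒜 α O v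

/-- The configuration `Dα` is `n`-recording. -/
def NRecordingCfg (A : Algorithm n) (input : Fin n → Bool) (D : Config A)
    (𝒜 : Set (List (Event n))) (α : List (Event n)) (O : A.ObjIdx) : Prop :=
  USetCfg A input D 𝒜 α O false ∩ USetCfg A input D 𝒜 α O true = ∅ ∧
  ∀ v : Bool, (run A input D α).oval O ∈ USetCfg A input D 𝒜 α O v →
    ∃! j : Fin n, OnTeam A input D 𝒜 α j (!v)

/-- Apply the operations `o i` of the processes listed in `σ`, in order, to an object of type
`T`, starting from the value `u`. -/
def applyOps (T : DetType) (o : Fin n → T.Op) : T.Value → List (Fin n) → T.Value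
  | u, [] => u
  | u, i :: σ => applyOps T o (T.δ u (o i)).2 σ

/-- `U_x`: the set of values obtainable by applying the operations of the processes of a
duplicate-free schedule whose first process is on team `x` to an object with initial value
`u`. -/
def UVals (T : DetType) (o : Fin n → T.Op) (u : T.Value) (team : Fin n → Bool) (x : Bool) :
    Set T.Value :=
  { v | ∃ (i : Fin n) (σ : List (Fin n)), team i = x ∧ (i :: σ).Nodup ∧
        v = applyOps T o u (i :: σ) }

/-- A deterministic type `T` is `n`-recording. -/
def NRecording (n : ℕ) (T : DetType) : Prop :=
  ∃ (u : T.Value) (team : Fin n → Bool) (o : Fin n → T.Op),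
    (∀ x : Bool, ∃ i, team i = x) ∧
    (UVals T o u team false ∩ UVals T o u team true = ∅) ∧
    (∀ x : Bool, u ∈ UVals T o u team x → ∃! i, team i = !x)

end RecoverableConsensus

namespace RecoverableConsensus

variable {n : ℕ}

/-! ### Schedules and runs -/

lemma eventBy_univ (e : Event n) : eventBy Set.univ e := by
  cases e <;> trivial

lemma eventBy_iff {P : Set (Fin n)} {e : Event n} :
    eventBy P e ↔ ∀ j ∉ P, e ≠ Event.step j ∧ e ≠ Event.crash j := by
  cases e <;> simp [eventBy, not_imp_not]

lemma isSched_nil (P : Set (Fin n)) : IsSched P [] := ⟨[], by simp⟩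

lemma IsSched.cons {j : Fin n} {σ : List (Event n)} (hσ : IsSched {k | k ≠ j} σ) :
    IsSched Set.univ (Event.step j :: σ) := by
  obtain ⟨l, hl, hlj, rfl⟩ := hσ
  exact ⟨j :: l, List.nodup_cons.2 ⟨fun hj => hlj j hj rfl, hl⟩, fun _ _ => trivial, rfl⟩

lemma IsSched.crashFree {P : Set (Fin n)} {σ : List (Event n)} (hσ : IsSched P σ) :
    CrashFree σ := by
  obtain ⟨l, -, -, rfl⟩ := hσ
  simp [CrashFree]

lemma crashFree_replicate_step (m : ℕ) (q : Fin n) :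
    CrashFree (List.replicate m (Event.step q)) := by
  simp [CrashFree]

lemma eventBy_of_mem_replicate_step {P : Set (Fin n)} {q : Fin n} (hq : q ∈ P) {m : ℕ}
    {e : Event n} (he : e ∈ List.replicate m (Event.step q)) : eventBy P e := by
  rw [List.eq_of_mem_replicate he]
  exact hq

lemma CrashFree.exists_step_of_not_forall_eventBy {P : Set (Fin n)} {σ : List (Event n)}
    (hσ : CrashFree σ) (h : ¬ ∀ e ∈ σ, eventBy P e) : ∃ p ∉ P, Event.step p ∈ σ := by
  push Not at h
  obtain ⟨e, he, heP⟩ := h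
  cases e with
  | step p => exact ⟨p, heP, he⟩
  | crash p => exact absurd he (hσ p)

lemma initSeg_getD_prefix (σ : List (Event n)) (e : Event n) (m : ℕ) :
    initSeg (fun t => σ.getD t e) m <+: σ ++ List.replicate m e := by
  have htake : initSeg (fun t => σ.getD t e) m = (σ ++ List.replicate m e).take m :=
    List.ext_getElem (by simp [initSeg]) fun t _ _ => by
      simp only [initSeg, List.getElem_map, List.getElem_range, List.getElem_take]
      grind
  exact htake ▸ List.take_prefix _ _

section Runs

variable {A : Algorithm n} {input : Fin n → Bool} {C D : Config A} {σ τ : List (Event n)}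
  {P : Set (Fin n)} {q : Fin n} {w : Bool} {O : A.ObjIdx}

lemma run_append (C : Config A) (σ τ : List (Event n)) :
    run A input C (σ ++ τ) = run A input (run A input C σ) τ := by
  induction σ generalizing C with
  | nil => rfl
  | cons e _ ih => exact ih _

lemma HasDecided.of_run (h : HasDecided A input (run A input C σ) τ q w) :
    HasDecided A input C (σ ++ τ) q w := by
  obtain ⟨ρ, hρ, hw⟩ := h
  exact ⟨σ ++ ρ, (List.prefix_append_right_inj σ).2 hρ, by rwa [run_append]⟩

lemma HasDecided.mono (h : HasDecided A input C σ q w) (hστ : σ <+: τ) :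
    HasDecided A input C τ q w := by
  obtain ⟨ρ, hρ, hw⟩ := h
  exact ⟨ρ, hρ.trans hστ, hw⟩

lemma PoisedAt.applyEvent_step {p r : Fin n} (hp : PoisedAt A C p O) (hr : PoisedAt A C r O)
    (hpr : p ≠ r) : PoisedAt A (applyEvent A input C (Event.step r)) p O := by
  obtain ⟨op, hop⟩ := hp
  obtain ⟨op', hop'⟩ := hr
  exact ⟨op, by simp [applyEvent, hop', hpr, hop]⟩

lemma PoisedAt.oval_applyEvent_step {p : Fin n} (hp : PoisedAt A C p O) {o : A.ObjIdx}
    (ho : o ≠ O) : (applyEvent A input C (Event.step p)).oval o = C.oval o := by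
  obtain ⟨op, hop⟩ := hp
  simp [applyEvent, hop, ho]

lemma IsSched.oval_run_of_ne (hσ : IsSched P σ) (hP : ∀ p ∈ P, PoisedAt A C p O)
    {o : A.ObjIdx} (ho : o ≠ O) : (run A input C σ).oval o = C.oval o := by
  obtain ⟨l, hl, hlP, rfl⟩ := hσ
  have hpoised : ∀ p ∈ l, PoisedAt A C p O := fun p hp => hP p (hlP p hp)
  clear hlP hP
  induction l generalizing C with
  | nil => rfl
  | cons p l ih =>
    obtain ⟨hpl, hl⟩ := List.nodup_cons.1 hl
    have hp : PoisedAt A C p O := hpoised p (by simp)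
    calc (run A input (applyEvent A input C (Event.step p)) (l.map Event.step)).oval o
        = (applyEvent A input C (Event.step p)).oval o :=
          ih hl fun r hr => (hpoised r (by simp [hr])).applyEvent_step hp
            fun h => hpl (h ▸ hr)
      _ = C.oval o := hp.oval_applyEvent_step ho

lemma IsSched.oval_run_eq (hσ : IsSched P σ) (hτ : IsSched P τ)
    (hP : ∀ p ∈ P, PoisedAt A C p O)
    (h : (run A input C σ).oval O = (run A input C τ).oval O) :
    (run A input C σ).oval = (run A input C τ).oval := by
  funext o
  by_cases ho : o = O
  · exact ho ▸ h
  · rw [hσ.oval_run_of_ne hP ho, hτ.oval_run_of_ne hP ho]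

/-! ### Indistinguishability -/

/-- The configurations `C` and `D` are indistinguishable to the processes in `P`: all objects have
the same values, and every process in `P` is in the same state.  The values of all objects are
compared, not only of those that processes in `P` access. -/
def Indist (P : Set (Fin n)) (C D : Config A) : Prop :=
  C.oval = D.oval ∧ ∀ j ∈ P, C.pstate j = D.pstate j

lemma Indist.applyEvent (h : Indist P C D) {e : Event n} (he : eventBy P e) :
    Indist P (applyEvent A input C e) (applyEvent A input D e) := by
  obtain ⟨hoval, hstate⟩ := h
  cases e with
  | crash i =>
    refine ⟨hoval, fun j hj => ?_⟩
    rcases eq_or_ne j i with rfl | hji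
    · simp [RecoverableConsensus.applyEvent]
    · simp [RecoverableConsensus.applyEvent, hji, hstate j hj]
  | step i =>
    simp only [RecoverableConsensus.applyEvent, hstate i he]
    rcases A.pending i (D.pstate i) with _ | ⟨o, op⟩
    · exact ⟨hoval, hstate⟩
    · refine ⟨by simp [hoval], fun j hj => ?_⟩
      rcases eq_or_ne j i with rfl | hji
      · simp [hoval]
      · simp [hji, hstate j hj]

lemma Indist.run (h : Indist P C D) (hσ : ∀ e ∈ σ, eventBy P e) :
    Indist P (run A input C σ) (run A input D σ) := by
  induction σ generalizing C D with
  | nil => exact h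
  | cons e σ ih =>
    rw [List.forall_mem_cons] at hσ
    exact ih (h.applyEvent hσ.1) hσ.2

lemma Indist.hasDecided (h : Indist P C D) (hq : q ∈ P) (hσ : ∀ e ∈ σ, eventBy P e)
    (hw : HasDecided A input D σ q w) : HasDecided A input C σ q w := by
  obtain ⟨τ, hτ, hw⟩ := hw
  exact ⟨τ, hτ, by rwa [(h.run fun e he => hσ e (hτ.subset he)).2 q hq]⟩

lemma oval_run_map_crash (C : Config A) (l : List (Fin n)) :
    (run A input C (l.map Event.crash)).oval = C.oval := by
  induction l generalizing C with
  | nil => rfl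
  | cons p _ ih => exact ih _

lemma pstate_run_map_crash {l : List (Fin n)} {j : Fin n}
    (h : j ∈ l ∨ C.pstate j = A.init j (input j)) :
    (run A input C (l.map Event.crash)).pstate j = A.init j (input j) := by
  induction l generalizing C with
  | nil => simpa [RecoverableConsensus.run] using h
  | cons p l ih =>
    refine ih ?_
    rcases eq_or_ne j p with rfl | hjp
    · simp [RecoverableConsensus.applyEvent]
    · simpa [RecoverableConsensus.applyEvent, hjp] using h

lemma oval_run_lambdaSched (C : Config A) (k : ℕ) :
    (run A input C (lambdaSched n k)).oval = C.oval :=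
  oval_run_map_crash C _

lemma pstate_run_lambdaSched (C : Config A) {k : ℕ} {j : Fin n} (hj : k ≤ j) :
    (run A input C (lambdaSched n k)).pstate j = A.init j (input j) :=
  pstate_run_map_crash (Or.inl (by simpa using hj))

lemma indist_run_lambdaSched (h : C.oval = D.oval) (k : ℕ) :
    Indist {j : Fin n | k ≤ j} (run A input C (lambdaSched n k))
      (run A input D (lambdaSched n k)) :=
  ⟨by rw [oval_run_lambdaSched, oval_run_lambdaSched, h],
    fun _ hj => by rw [pstate_run_lambdaSched C hj, pstate_run_lambdaSched D hj]⟩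

lemma exists_hasDecided_append_replicate (hA : RecWaitFree A)
    (hC : C.pstate q = A.init q (input q)) (σ : List (Event n)) :
    ∃ m w, HasDecided A input C (σ ++ List.replicate m (Event.step q)) q w := by
  let e : ℕ → Event n := fun t => σ.getD t (Event.step q)
  have he : ∀ t, σ.length ≤ t → e t = Event.step q := fun t ht => by
    simp [e, List.getD, List.getElem?_eq_none ht]
  obtain ⟨m, w, hw⟩ := hA input C e q (Or.inl hC)
    (fun m => ⟨max m σ.length, le_max_left _ _, he _ (le_max_right _ _)⟩)
    ⟨σ.length, fun t ht => by simp [he t ht]⟩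
  exact ⟨m, w, initSeg e m, initSeg_getD_prefix σ _ m, hw⟩

lemma exists_common_decision (hA : RecWaitFree A) (h : C.oval = D.oval) (q : Fin n) :
    ∃ m w, HasDecided A input C (Event.crash q :: List.replicate m (Event.step q)) q w ∧
      HasDecided A input D (Event.crash q :: List.replicate m (Event.step q)) q w := by
  set C' := run A input C [Event.crash q]
  set D' := run A input D [Event.crash q]
  have hC' : C'.pstate q = A.init q (input q) := Function.update_self ..
  have hD' : D'.pstate q = A.init q (input q) := Function.update_self ..
  have hindist : Indist {q} D' C' :=
    ⟨h.symm, fun j hj => by rw [Set.mem_singleton_iff.1 hj, hC', hD']⟩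
  obtain ⟨m, w, hw⟩ := exists_hasDecided_append_replicate hA hC' []
  have hw' : HasDecided A input D' (List.replicate m (Event.step q)) q w :=
    hindist.hasDecided rfl (fun _ => eventBy_of_mem_replicate_step (Set.mem_singleton q)) hw
  exact ⟨m, w, hw.of_run, hw'.of_run⟩

end Runs

/-! ### Crash bounds -/

section CrashBounds

variable {z k : ℕ} {i j q : Fin n} {σ τ : List (Event n)}

lemma crashCount_eq_count (i : Fin n) (σ : List (Event n)) :
    crashCount i σ = σ.count (Event.crash i) :=
  List.countP_eq_length_filter.symm

lemma crashCount_append (i : Fin n) (σ τ : List (Event n)) :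
    crashCount i (σ ++ τ) = crashCount i σ + crashCount i τ := by
  simp [crashCount]

lemma stepsBelow_append (i : Fin n) (σ τ : List (Event n)) :
    stepsBelow i (σ ++ τ) = stepsBelow i σ + stepsBelow i τ := by
  simp [stepsBelow]

lemma CrashFree.crashCount_eq_zero (hσ : CrashFree σ) (i : Fin n) : crashCount i σ = 0 :=
  (crashCount_eq_count i σ).trans (List.count_eq_zero.2 (hσ i))

lemma stepsBelow_map_crash (i : Fin n) (l : List (Fin n)) :
    stepsBelow i (l.map Event.crash) = 0 := by
  simp [stepsBelow, isStepBelow]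

lemma stepsBelow_pos (hji : j < i) (hj : Event.step j ∈ σ) : 0 < stepsBelow i σ :=
  List.length_pos_of_mem (List.mem_filter.2 ⟨hj, decide_eq_true hji⟩)

lemma crashCount_lambdaSched (k : ℕ) (j : Fin n) :
    crashCount j (lambdaSched n k) = if k ≤ j then 1 else 0 := by
  have hnodup : (lambdaSched n k).Nodup :=
    ((List.nodup_finRange n).filter _).map fun _ _ h => Event.crash.inj h
  rw [crashCount_eq_count, hnodup.count]
  simp [lambdaSched]

lemma EMem.append (hσ : EMem z σ) (hτ : EMem z τ) : EMem z (σ ++ τ) := fun i => by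
  rw [crashCount_append, stepsBelow_append, mul_add]
  exact add_le_add (hσ i) (hτ i)

lemma CrashFree.eMem (hσ : CrashFree σ) : EMem z σ := fun i => by
  rw [hσ.crashCount_eq_zero]
  exact Nat.zero_le _

lemma eMem_of_mem_eStarSet (hσ : σ ∈ EStarSet n z) : EMem z σ :=
  hσ σ (List.prefix_refl σ)

lemma mem_eStarSet_of_prefix (hτ : τ ∈ EStarSet n z) (hστ : σ <+: τ) : σ ∈ EStarSet n z :=
  fun _ hρ => hτ _ (hρ.trans hστ)

lemma append_mem_eStarSet_of_forall_prefix (hσ : σ ∈ EStarSet n z)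
    (hτ : ∀ ρ, ρ <+: τ → EMem z (σ ++ ρ)) : σ ++ τ ∈ EStarSet n z := by
  intro ρ hρ
  rcases List.prefix_or_prefix_of_prefix hρ (List.prefix_append σ τ) with h | ⟨ρ', rfl⟩
  · exact hσ ρ h
  · exact hτ ρ' ((List.prefix_append_right_inj σ).1 hρ)

lemma append_mem_eStarSet (hσ : σ ∈ EStarSet n z) (hτ : τ ∈ EStarSet n z) :
    σ ++ τ ∈ EStarSet n z :=
  append_mem_eStarSet_of_forall_prefix hσ fun ρ hρ => (eMem_of_mem_eStarSet hσ).append (hτ ρ hρ)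

lemma CrashFree.mem_eStarSet (hσ : CrashFree σ) : σ ∈ EStarSet n z :=
  fun _ hτ => CrashFree.eMem fun i hi => hσ i (hτ.subset hi)

-- Trailing crashes only use up the crash bound, so among the prefixes that end in them the whole
-- execution is the worst.
lemma append_map_crash_mem_eStarSet {l : List (Fin n)} (hσ : σ ∈ EStarSet n z)
    (h : EMem z (σ ++ l.map Event.crash)) : σ ++ l.map Event.crash ∈ EStarSet n z := by
  refine append_mem_eStarSet_of_forall_prefix hσ fun ρ hρ i => ?_
  have hle : crashCount i ρ ≤ crashCount i (l.map Event.crash) :=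
    (hρ.sublist.filter _).length_le
  have hi := h i
  rw [crashCount_append, stepsBelow_append, stepsBelow_map_crash, add_zero] at hi
  rw [crashCount_append, stepsBelow_append, mul_add]
  omega

lemma append_lambdaSched_mem_eStarSet (hz : 1 ≤ z) (hσ : CrashFree σ) (hj : Event.step j ∈ σ)
    (hjk : j < k) : σ ++ lambdaSched n k ∈ EStarSet n z := by
  refine append_map_crash_mem_eStarSet hσ.mem_eStarSet fun i => ?_
  change crashCount i (σ ++ lambdaSched n k) ≤ z * n * stepsBelow i (σ ++ lambdaSched n k)
  rw [crashCount_append, hσ.crashCount_eq_zero, zero_add, crashCount_lambdaSched,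
    stepsBelow_append]
  split_ifs with hki
  · have hsteps : 0 < stepsBelow i σ := stepsBelow_pos (Fin.lt_def.2 (hjk.trans_le hki)) hj
    have hn : 0 < n := i.pos
    exact Nat.succ_le_of_lt (by positivity)
  · exact Nat.zero_le _

/-- The crash bound leaves room for one more crash of `q` at the end of `σ`. -/
def CanCrash (z : ℕ) (q : Fin n) (σ : List (Event n)) : Prop :=
  crashCount q σ < z * n * stepsBelow q σ

lemma CanCrash.append_right (hσ : CanCrash z q σ) (hτ : EMem z τ) : CanCrash z q (σ ++ τ) := by
  rw [CanCrash, crashCount_append, stepsBelow_append, mul_add]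
  exact add_lt_add_of_lt_of_le hσ (hτ q)

lemma CanCrash.append_left (hτ : CanCrash z q τ) (hσ : EMem z σ) : CanCrash z q (σ ++ τ) := by
  rw [CanCrash, crashCount_append, stepsBelow_append, mul_add]
  exact add_lt_add_of_le_of_lt (hσ q) hτ

lemma CanCrash.append_crash_mem_eStarSet (hq : CanCrash z q σ) (hσ : σ ∈ EStarSet n z) :
    σ ++ [Event.crash q] ∈ EStarSet n z := by
  refine append_map_crash_mem_eStarSet (l := [q]) hσ fun i => ?_
  rw [crashCount_append, stepsBelow_append, stepsBelow_map_crash, add_zero, crashCount_eq_count i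
    (List.map _ _)]
  rcases eq_or_ne q i with rfl | hqi
  · simpa [CanCrash] using hq
  · simpa [hqi] using eMem_of_mem_eStarSet hσ i

lemma CrashFree.canCrash (hz : 1 ≤ z) (hσ : CrashFree σ) (hj : Event.step j ∈ σ) (hjq : j < q) :
    CanCrash z q σ := by
  have hsteps : 0 < stepsBelow q σ := stepsBelow_pos hjq hj
  have hn : 0 < n := q.pos
  rw [CanCrash, hσ.crashCount_eq_zero]
  positivity

lemma canCrash_append_lambdaSched (hz : 1 ≤ z) (hσ : CrashFree σ) (hj : Event.step j ∈ σ)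
    (hjq : j < q) : CanCrash z q (σ ++ lambdaSched n k) := by
  have hsteps : 0 < stepsBelow q σ := stepsBelow_pos hjq hj
  have hn : 2 ≤ n := by omega
  calc crashCount q (σ ++ lambdaSched n k)
      = crashCount q (lambdaSched n k) := by
        rw [crashCount_append, hσ.crashCount_eq_zero, zero_add]
    _ ≤ 1 := by rw [crashCount_lambdaSched]; split_ifs <;> omega
    _ < 1 * 2 * 1 := by norm_num
    _ ≤ z * n * stepsBelow q (σ ++ lambdaSched n k) := by
        rw [stepsBelow_append]; gcongr; omega

end CrashBounds

/-! ### Valency -/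

section Valency

variable {A : Algorithm n} {input : Fin n → Bool} {C D : Config A} {z : ℕ}
  {𝒜 : Set (List (Event n))} {α β ρ σ τ : List (Event n)} {P : Set (Fin n)} {i j q : Fin n}
  {v w : Bool} {O : A.ObjIdx}

lemma VUnivalentIn.append (h : VUnivalentIn A input C 𝒜 P α v) (hβ : ∀ e ∈ β, eventBy P e)
    (hαβ : α ++ β ∈ 𝒜) : VUnivalentIn A input C 𝒜 P (α ++ β) v := by
  refine ⟨hαβ, fun γ hγ hmem i w hw => ?_⟩
  rw [List.append_assoc] at hmem hw
  exact h.2 (β ++ γ) (List.forall_mem_append.2 ⟨hβ, hγ⟩) hmem i w hw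

lemma VUnivalentIn.eq_of_hasDecided (h : VUnivalentIn A input C 𝒜 Set.univ α v)
    (hαβ : α ++ β ∈ 𝒜) (hw : HasDecided A input C (α ++ β) i w) : w = v :=
  h.2 β (fun e _ => eventBy_univ e) hαβ i w hw

lemma OnTeam.append (h : OnTeam A input C (EStarSet n z) α i v) (hσ : CrashFree σ) :
    VUnivalentIn A input C (EStarSet n z) Set.univ (α ++ Event.step i :: σ) v := by
  simpa using VUnivalentIn.append h (fun e _ => eventBy_univ e)
    (append_mem_eStarSet h.1 hσ.mem_eStarSet)

lemma exists_isSched_of_mem_uSetCfg {u : (A.objType O).Value}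
    (hu : u ∈ USetCfg A input C (EStarSet n z) α O v) :
    ∃ j σ, OnTeam A input C (EStarSet n z) α j v ∧ IsSched Set.univ (Event.step j :: σ) ∧
      VUnivalentIn A input C (EStarSet n z) Set.univ (α ++ Event.step j :: σ) v ∧
      u = (run A input C (α ++ Event.step j :: σ)).oval O := by
  obtain ⟨j, σ, hj, hσ, rfl⟩ := hu
  exact ⟨j, σ, hj, hσ.cons, hj.append hσ.crashFree, rfl⟩

lemma valency_eq_of_oval_eq (hA : RecWaitFree A)
    (hσ : VUnivalentIn A input C (EStarSet n z) Set.univ σ v)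
    (hτ : VUnivalentIn A input D (EStarSet n z) Set.univ τ w)
    (hσq : CanCrash z q σ) (hτq : CanCrash z q τ)
    (hoval : (run A input C σ).oval = (run A input D τ).oval) : v = w := by
  obtain ⟨m, u, hC, hD⟩ := exists_common_decision (input := input) hA hoval q
  have hmem : ∀ {ρ : List (Event n)}, ρ ∈ EStarSet n z → CanCrash z q ρ →
      ρ ++ Event.crash q :: List.replicate m (Event.step q) ∈ EStarSet n z := fun hρ hρq => by
    simpa using append_mem_eStarSet (hρq.append_crash_mem_eStarSet hρ)
      (crashFree_replicate_step m q).mem_eStarSet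
  exact (hσ.eq_of_hasDecided (hmem hσ.1 hσq) hC.of_run).symm.trans
    (hτ.eq_of_hasDecided (hmem hτ.1 hτq) hD.of_run)

lemma OnTeam.eq_of_indist (hA : RecWaitFree A) (h : OnTeam A input D (EStarSet n z) α q w)
    (hβ : VUnivalentIn A input C (EStarSet n z) Set.univ β v)
    (hβD : Indist P (run A input C β) D) (hq : q ∈ P) (hα : ∀ e ∈ α, eventBy P e)
    (hDq : D.pstate q = A.init q (input q)) : w = v := by
  obtain ⟨m, u, hu⟩ := exists_hasDecided_append_replicate hA hDq α
  have hsolo : CrashFree (List.replicate (m + 1) (Event.step q)) := crashFree_replicate_step _ q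
  have hmem : α ++ List.replicate (m + 1) (Event.step q) ∈ EStarSet n z :=
    append_mem_eStarSet (mem_eStarSet_of_prefix h.1 (List.prefix_append _ _)) hsolo.mem_eStarSet
  have hD : HasDecided A input D (α ++ List.replicate (m + 1) (Event.step q)) q u :=
    hu.mono (by simp [List.replicate_succ'])
  have hC : HasDecided A input C (β ++ (α ++ List.replicate (m + 1) (Event.step q))) q u :=
    (hβD.hasDecided hq (List.forall_mem_append.2
      ⟨hα, fun _ => eventBy_of_mem_replicate_step hq⟩) hD).of_run
  have huv : u = v := hβ.eq_of_hasDecided (append_mem_eStarSet hβ.1 hmem) hC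
  rw [List.replicate_succ, List.append_cons] at hmem hD
  exact (VUnivalentIn.eq_of_hasDecided h hmem hD).symm.trans huv

lemma eq_of_oval_mem_uSetCfg (hA : RecWaitFree A) (hz : 1 ≤ z) (hq : IsTop q)
    (hα : α ∈ EStarSet n z) (hO : ∀ p, PoisedAt A (run A input D α) p O)
    (hqw : ¬ OnTeam A input D (EStarSet n z) α q w)
    (hρ : VUnivalentIn A input C (EStarSet n z) Set.univ ρ v) (hρq : CanCrash z q ρ)
    (hσ : IsSched Set.univ σ)
    (hoval : (run A input C ρ).oval = (run A input D (α ++ σ)).oval)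
    (hmem : (run A input D (α ++ σ)).oval O ∈ USetCfg A input D (EStarSet n z) α O w) :
    v = w := by
  obtain ⟨b, τ, hb, hτ, hτw, hval⟩ := exists_isSched_of_mem_uSetCfg hmem
  have hbq : b < q := (hq b).lt_of_ne fun h => hqw (h ▸ hb)
  have hτq : CanCrash z q (α ++ Event.step b :: τ) :=
    (hτ.crashFree.canCrash hz (by simp) hbq).append_left (eMem_of_mem_eStarSet hα)
  refine valency_eq_of_oval_eq hA hρ hτw hρq hτq (hoval.trans ?_)
  rw [run_append, run_append] at hval ⊢
  exact hσ.oval_run_eq hτ (fun p _ => hO p) hval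

lemma disjoint_uSetCfg_and_oval_notMem_of_indist (hA : RecWaitFree A) (hz : 1 ≤ z)
    (hq : IsTop q) (hqP : q ∈ P)
    (hβ : VUnivalentIn A input C (EStarSet n z) Set.univ β v) (hβq : CanCrash z q β)
    (hβD : Indist P (run A input C β) D) (hDq : D.pstate q = A.init q (input q))
    (hα : α ∈ EStarSet n z) (hαP : ∀ e ∈ α, eventBy P e)
    (hO : ∀ p, PoisedAt A (run A input D α) p O) :
    Disjoint (USetCfg A input D (EStarSet n z) α O v)
        (USetCfg A input D (EStarSet n z) α O (!v)) ∧
      (run A input D α).oval O ∉ USetCfg A input D (EStarSet n z) α O (!v) := by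
  have hqteam : ¬ OnTeam A input D (EStarSet n z) α q (!v) := fun h =>
    Bool.not_ne_self v (h.eq_of_indist hA hβ hβD hqP hαP hDq)
  have hlow : ∀ σ, IsSched Set.univ σ → (∀ e ∈ σ, eventBy P e) →
      (run A input D (α ++ σ)).oval O ∉ USetCfg A input D (EStarSet n z) α O (!v) := by
    intro σ hσ hσP hmem
    have hασ : α ++ σ ∈ EStarSet n z := append_mem_eStarSet hα hσ.crashFree.mem_eStarSet
    have hβασ := hβ.append (fun e _ => eventBy_univ e) (append_mem_eStarSet hβ.1 hασ)
    refine Bool.self_ne_not v (eq_of_oval_mem_uSetCfg hA hz hq hα hO hqteam hβασ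
      (hβq.append_right (eMem_of_mem_eStarSet hασ)) hσ ?_ hmem)
    rw [run_append]
    exact (hβD.run (List.forall_mem_append.2 ⟨hαP, hσP⟩)).1
  refine ⟨Set.disjoint_left.2 fun u hu hmem => ?_, ?_⟩
  · obtain ⟨a, σ, -, hσ, hσv, rfl⟩ := exists_isSched_of_mem_uSetCfg hu
    by_cases hσP : ∀ e ∈ Event.step a :: σ, eventBy P e
    · exact hlow _ hσ hσP hmem
    · obtain ⟨p, hpP, hp⟩ := hσ.crashFree.exists_step_of_not_forall_eventBy hσP
      have hpq : p < q := (hq p).lt_of_ne fun h => hpP (h ▸ hqP)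
      exact Bool.self_ne_not v (eq_of_oval_mem_uSetCfg hA hz hq hα hO hqteam hσv
        ((hσ.crashFree.canCrash hz hp hpq).append_left (eMem_of_mem_eStarSet hα)) hσ rfl hmem)
  · simpa using hlow [] (isSched_nil _) (by simp)

lemma nRecordingCfg_or_vHiding
    (h : Disjoint (USetCfg A input D 𝒜 α O v) (USetCfg A input D 𝒜 α O (!v)) ∧
      (run A input D α).oval O ∉ USetCfg A input D 𝒜 α O (!v)) :
    NRecordingCfg A input D 𝒜 α O ∨ VHiding A input D 𝒜 α O v := by
  obtain ⟨hdisj, hnot⟩ := h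
  have hinter : USetCfg A input D 𝒜 α O false ∩ USetCfg A input D 𝒜 α O true = ∅ := by
    cases v
    · exact hdisj.inter_eq
    · exact hdisj.symm.inter_eq
  by_cases hv : (run A input D α).oval O ∈ USetCfg A input D 𝒜 α O v
  · exact Or.inr ⟨hinter, hv⟩
  · refine Or.inl ⟨hinter, fun w hw => ?_⟩
    rcases Bool.eq_or_eq_not w v with rfl | rfl
    · exact absurd hw hv
    · exact absurd hw hnot

end Valency

end RecoverableConsensus

open RecoverableConsensus in
theorem main_technical_lemma_general {n : ℕ} {A : Algorithm n} (hA : RecWaitFree A)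
    {input : Fin n → Bool} {C : Config A} {z : ℕ} (hz : 1 ≤ z) {α : List (Event n)}
    {O : A.ObjIdx} (hO : ∀ p, PoisedAt A (run A input C α) p O) {v : Bool}
    {S X : List (Event n)} (hS : IsSched Set.univ S) (hX : IsSched Set.univ X)
    (hv : VUnivalentIn A input C (EStarSet n z) Set.univ (α ++ S) v)
    (hval : (run A input C (α ++ S)).oval O = (run A input C (α ++ X)).oval O)
    {ℓ : Fin n} (hℓ : Event.step ℓ ∈ S) {k : ℕ} (hℓk : ℓ < k) (hkn : k < n)
    {D : Config A} (hD : D = run A input C (α ++ X ++ lambdaSched n k))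
    {α' : List (Event n)} (hα' : α' ∈ EStarSet n z)
    (hα'k : ∀ e ∈ α', eventBy {j : Fin n | k ≤ j} e) {O' : A.ObjIdx}
    (hO' : ∀ p, PoisedAt A (run A input D α') p O') :
    Disjoint (USetCfg A input D (EStarSet n z) α' O' v)
        (USetCfg A input D (EStarSet n z) α' O' (!v)) ∧
      (run A input D α').oval O' ∉ USetCfg A input D (EStarSet n z) α' O' (!v) := by
  let q : Fin n := ⟨n - 1, by omega⟩
  have hkq : k ≤ q := Nat.le_sub_one_of_lt hkn
  have hα : α ∈ EStarSet n z := mem_eStarSet_of_prefix hv.1 (List.prefix_append α S)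
  have hβ : VUnivalentIn A input C (EStarSet n z) Set.univ (α ++ S ++ lambdaSched n k) v :=
    hv.append (fun e _ => eventBy_univ e) <| by
      simpa using append_mem_eStarSet hα
        (append_lambdaSched_mem_eStarSet hz hS.crashFree hℓ hℓk)
  have hβq : CanCrash z q (α ++ S ++ lambdaSched n k) := by
    simpa using (canCrash_append_lambdaSched hz hS.crashFree hℓ (hℓk.trans_le hkq)).append_left
      (eMem_of_mem_eStarSet hα)
  have hoval : (run A input C (α ++ S)).oval = (run A input C (α ++ X)).oval := by
    rw [run_append, run_append] at hval ⊢
    exact hS.oval_run_eq hX (fun p _ => hO p) hval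
  have hβD : Indist {j : Fin n | k ≤ j} (run A input C (α ++ S ++ lambdaSched n k)) D := by
    rw [hD, run_append C (α ++ S), run_append C (α ++ X)]
    exact indist_run_lambdaSched hoval k
  have hDq : D.pstate q = A.init q (input q) := by
    rw [hD, run_append]
    exact pstate_run_lambdaSched _ hkq
  exact disjoint_uSetCfg_and_oval_notMem_of_indist hA hz (fun j => Nat.le_sub_one_of_lt j.isLt)
    hkq hβ hβq hβD hDq hα' hα'k hO'

open RecoverableConsensus in
/-- In the critical-execution setting, with `O` the object that every
process is poised to access in `Cα`, suppose `p_i` is on team `v`, `R_i ∈ 𝒮(𝒫 - {p_i})`, and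
`value(O, Cα p_i R_i) = value(O, Cα X)` where either `X = p_{n-1}` and `p_{n-1}` is on team
`¬v`, or `X = ⟨⟩`.  Let `p_ℓ` be the process with the smallest identifier among `p_i` and the
processes taking steps in `R_i`.  Then for every `k ∈ {ℓ+1, …, n-1}` and every execution
`α' ∈ 𝓔*_z(CαXλ_k)` containing no events by `p_0, …, p_{k-1}` that is critical with respect
to `𝓔*_z(CαXλ_k)`, the configuration `CαXλ_kα'` is either `n`-recording or `v`-hiding (with
respect to `α'`, the execution set `𝓔*_z(CαXλ_k)`, and the common object `O'` that all
processes are poised to access in `CαXλ_kα'`). -/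
theorem main_technical_lemma
    (n : ℕ) (hn : 2 ≤ n) (A : Algorithm n) (hA : SolvesRecConsensus A)
    (input : Fin n → Bool) (C : Config A) (z : ℕ) (hz : 1 ≤ z)
    (α : List (Event n)) (hα : α ∈ EStarSet n z)
    (hcrit : Critical A input C (EStarSet n z) α)
    (O : A.ObjIdx) (hO : ∀ p : Fin n, PoisedAt A (run A input C α) p O)
    (v : Bool) (i : Fin n)
    (hi : OnTeam A input C (EStarSet n z) α i v)
    (Ri : List (Event n)) (hRi : IsSched {k : Fin n | k ≠ i} Ri)
    (X : List (Event n))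
    (hX : (X = [Event.step (⟨n - 1, by omega⟩ : Fin n)] ∧
            OnTeam A input C (EStarSet n z) α ⟨n - 1, by omega⟩ (!v)) ∨ X = [])
    (hval : (run A input C (α ++ Event.step i :: Ri)).oval O =
            (run A input C (α ++ X)).oval O)
    (ℓ : Fin n)
    (hℓmem : ℓ = i ∨ Event.step ℓ ∈ Ri)
    (hℓmin : ∀ j : Fin n, (j = i ∨ Event.step j ∈ Ri) → ℓ ≤ j)
    (k : ℕ) (hk1 : ℓ.val + 1 ≤ k) (hk2 : k ≤ n - 1)
    (α' : List (Event n)) (hα' : α' ∈ EStarSet n z)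
    (hnolow : ∀ e ∈ α', ∀ j : Fin n, j.val < k → e ≠ Event.step j ∧ e ≠ Event.crash j)
    (hcrit' : Critical A input (run A input C (α ++ X ++ lambdaSched n k))
                (EStarSet n z) α')
    (O' : A.ObjIdx)
    (hO' : ∀ p : Fin n,
      PoisedAt A (run A input (run A input C (α ++ X ++ lambdaSched n k)) α') p O') :
    NRecordingCfg A input (run A input C (α ++ X ++ lambdaSched n k)) (EStarSet n z) α' O' ∨
    VHiding A input (run A input C (α ++ X ++ lambdaSched n k)) (EStarSet n z) α' O' v := by
  have hXsched : IsSched Set.univ X := by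
    rcases hX with ⟨rfl, -⟩ | rfl
    exacts [(isSched_nil _).cons, isSched_nil _]
  have hℓstep : Event.step ℓ ∈ Event.step i :: Ri := by simpa using hℓmem
  exact nRecordingCfg_or_vHiding <| main_technical_lemma_general hA.2.2 hz hO hRi.cons hXsched
    (hi.append hRi.crashFree) hval hℓstep hk1 (by omega) rfl hα'
    (fun e he => eventBy_iff.2 fun j hj => hnolow e he j (not_le.1 hj)) hO'
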